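/- arXiv:1201.2715 — 2 statements merged into one kernel-verified Lean document; each statement's English description precedes it below -/
import Mathlib

section
/- Consider the balancing circuit model on a graph G on n vertices with round matrix satisfying λ(M) < 1, and run the discrete process with independent uniformly random orientations from an initial vector x^{(0)} ∈ ℤ^n with discrepancy at most K. Then for all sufficiently large n, after t = τ_cont(K,1) rounds, with probability at least 1 − 2n^{−2} the discrepancy of x^{(t)} is at most 12√(log n) + 1. -/
namespace LB


/-- A matching on the vertex set `Fin n`, encoded as an involution;
`f u = u` means that `u` is unmatched, and `f u = v ≠ u` means `{u,v}`
is an edge of the matching. -/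
structure Matching (n : ℕ) where
  f : Fin n → Fin n
  invol : ∀ u, f (f u) = u

/-- The matching matrix of a matching: entries `1/2` at `(u,u)`, `(u,v)`, `(v,u)`, `(v,v)`
for matched pairs `{u,v}`, entry `1` at `(w,w)` for unmatched `w`, and `0` otherwise. -/
noncomputable def Matching.matrix {n : ℕ} (m : Matching n) : Matrix (Fin n) (Fin n) ℝ :=
  Matrix.of fun u v =>
    if m.f u = u then (if v = u then 1 else 0)
    else if v = u ∨ v = m.f u then (1 : ℝ) / 2 else 0

/-- `M^{[t₁,t₂]} = M^{(t₁)} * ⋯ * M^{(t₂)}` (the identity matrix if `t₁ > t₂`). -/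
noncomputable def prodMatrix {n : ℕ} (M : ℕ → Matching n) (t₁ t₂ : ℕ) : Matrix (Fin n) (Fin n) ℝ :=
  ((List.range' t₁ (t₂ + 1 - t₁)).map fun s => (M s).matrix).prod

/-- Sum of `g u v` over the matched pairs `[u:v]` (i.e. `{u,v}` in the matching with `u < v`). -/
noncomputable def pairSum {n : ℕ} (m : Matching n) (g : Fin n → Fin n → ℝ) : ℝ :=
  ∑ u : Fin n, if u < m.f u then g u (m.f u) else 0

/-- The discrepancy `max_{u,v} |x_u - x_v|` of a load vector. -/
noncomputable def disc {n : ℕ} (x : Fin n → ℝ) : ℝ :=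
  ⨆ u : Fin n, ⨆ v : Fin n, |x u - x v|

/-- Discrepancy of an integer load vector. -/
noncomputable def discZ {n : ℕ} (x : Fin n → ℤ) : ℝ := disc fun u => (x u : ℝ)

/-- The time interval `[t₁,t₂]` (with its matchings) is `(K,ε)`-smoothing. -/
def IsSmoothing {n : ℕ} (M : ℕ → Matching n) (t₁ t₂ : ℕ) (K ε : ℝ) : Prop :=
  ∀ ξ : Fin n → ℝ, disc ξ ≤ K → disc (Matrix.vecMul ξ (prodMatrix M (t₁ + 1) t₂)) ≤ ε

/-- `τ_cont(K,ε)`: the minimum `t` such that `[0,t]` is `(K,ε)`-smoothing. -/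
noncomputable def tauCont {n : ℕ} (M : ℕ → Matching n) (K ε : ℝ) : ℕ :=
  sInf {t : ℕ | IsSmoothing M 0 t K ε}

/-- One round of the discrete process: two matched nodes split their total load,
the node indicated by the orientation bit (stored at the pair `(min,max)`) receiving
the excess token; `φ u v = true` for `u < v` means the excess token goes to `u`. -/
def step {n : ℕ} (m : Matching n) (φ : Fin n → Fin n → Bool) (x : Fin n → ℤ) :
    Fin n → ℤ := fun u =>
  if m.f u = u then x u
  else if u < m.f u then
    (if φ u (m.f u) then Int.ediv (x u + x (m.f u) + 1) 2
     else Int.ediv (x u + x (m.f u)) 2)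
  else
    (if φ (m.f u) u then Int.ediv (x u + x (m.f u)) 2
     else Int.ediv (x u + x (m.f u) + 1) 2)

/-- The discrete process started at round `t₁` from load vector `x`:
`loadsFrom M t₁ Φ x r` is the load vector `r` rounds later; the `(r+1)`-st
step uses the matching `M (t₁+r+1)` and the orientations `Φ (r+1)`. -/
def loadsFrom {n : ℕ} (M : ℕ → Matching n) (t₁ : ℕ) (Φ : ℕ → Fin n → Fin n → Bool)
    (x : Fin n → ℤ) : ℕ → Fin n → ℤ
  | 0 => x
  | r + 1 => step (M (t₁ + r + 1)) (Φ (r + 1)) (loadsFrom M t₁ Φ x r)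

/-- The discrete process started at round `0`; round `t ≥ 1` uses matching `M t`. -/
def loads {n : ℕ} (M : ℕ → Matching n) (Φ : ℕ → Fin n → Fin n → Bool)
    (x : Fin n → ℤ) : ℕ → Fin n → ℤ := loadsFrom M 0 Φ x

/-- Extend a finite family of random choices (one for each of the rounds `1,…,T`)
to all rounds: round `s` reads index `s-1`. -/
def lift {A : Type*} (a₀ : A) {T : ℕ} (ω : Fin T → A) : ℕ → A := fun s =>
  if h : s - 1 < T then ω ⟨s - 1, h⟩ else a₀

/-- Default (irrelevant) orientation. -/
def orientDefault (n : ℕ) : Fin n → Fin n → Bool := fun _ _ => true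

/-- Probability of an event under the uniform distribution on a finite sample space;
this makes all the per-round random choices independent and uniform. -/
noncomputable def pr {Ω : Type*} [Fintype Ω] (A : Ω → Prop) : ℝ :=
  haveI := Classical.decPred A
  ((Finset.univ.filter A).card : ℝ) / (Fintype.card Ω : ℝ)

/-- Expectation under the uniform distribution on a finite sample space. -/
noncomputable def ex {Ω : Type*} [Fintype Ω] (Z : Ω → ℝ) : ℝ :=
  (∑ ω : Ω, Z ω) / (Fintype.card Ω : ℝ)

/-- `λ(M) = max{|λ₂(M)|, |λ_n(M)|}` for a symmetric doubly stochastic matrix `M`,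
characterized as the operator norm of `M` on the subspace orthogonal to `𝟙`. -/
noncomputable def lamMax {n : ℕ} (M : Matrix (Fin n) (Fin n) ℝ) : ℝ :=
  ⨆ x : {x : Fin n → ℝ // (∑ u, x u) = 0 ∧ (∑ u, (x u) ^ 2) = 1},
    Real.sqrt (∑ u, (M.mulVec x.1 u) ^ 2)

/-- The round matrix `M = M^{(1)} ⋯ M^{(d)}` of the balancing circuit. -/
noncomputable def roundMatrix {n d : ℕ} (Ms : Fin d → Matching n) : Matrix (Fin n) (Fin n) ℝ :=
  (List.ofFn fun i => (Ms i).matrix).prod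

/-- The periodic sequence of matchings of the balancing circuit:
round `t` uses `M^{(((t-1) mod d)+1)}`. -/
def circuit {n d : ℕ} (hd : 0 < d) (Ms : Fin d → Matching n) : ℕ → Matching n :=
  fun t => Ms ⟨(t - 1) % d, Nat.mod_lt _ hd⟩



noncomputable def avg {n : ℕ} (m : Matching n) (y : Fin n → ℝ) : Fin n → ℝ := fun u =>
  if m.f u = u then y u else (y u + y (m.f u)) / 2

theorem mulVec_matrix {n : ℕ} (m : Matching n) (y : Fin n → ℝ) :
    m.matrix.mulVec y = avg m y := by
  funext u
  unfold avg Matching.matrix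
  simp only [Matrix.mulVec, dotProduct, Matrix.of_apply]
  split_ifs with h
  · simp
  · have h' : ∀ v, (if v = u ∨ v = m.f u then (1:ℝ)/2 else 0) * y v
        = (if v = u then y v / 2 else 0) + (if v = m.f u then y v / 2 else 0) := by
      intro v
      by_cases h1 : v = u
      · subst h1
        have : ¬ v = m.f v := fun e => h e.symm
        simp [this]; ring
      · by_cases h2 : v = m.f u
        · simp [h1, h2, h]; ring
        · simp [h1, h2]
    simp only [h', Finset.sum_add_distrib, Finset.sum_ite_eq', Finset.mem_univ, if_true]
    ring

theorem matrix_symm {n : ℕ} (m : Matching n) : m.matrix.transpose = m.matrix := by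
  ext u v
  simp only [Matching.matrix, Matrix.transpose_apply, Matrix.of_apply]
  have := m.invol u
  have := m.invol v
  grind

theorem vecMul_matrix {n : ℕ} (m : Matching n) (y : Fin n → ℝ) :
    Matrix.vecMul y m.matrix = avg m y := by
  rw [← Matrix.mulVec_transpose, matrix_symm, mulVec_matrix]

theorem sum_avg_mul {n : ℕ} (m : Matching n) (x y : Fin n → ℝ) :
    ∑ u, avg m x u * y u = ∑ u, x u * avg m y u := by
  have h := Matrix.dotProduct_mulVec x m.matrix y
  rw [mulVec_matrix, vecMul_matrix] at h
  exact h.symm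

theorem sum_avg {n : ℕ} (m : Matching n) (x : Fin n → ℝ) :
    ∑ u, avg m x u = ∑ u, x u := by
  have h := sum_avg_mul m x (fun _ => 1)
  have h1 : avg m (fun _ => 1) = fun _ => 1 := by
    funext u; simp [avg]
  rw [h1] at h
  simpa using h

theorem sum_pairs {n : ℕ} (m : Matching n) (H : Fin n → ℝ) (h0 : ∀ u, m.f u = u → H u = 0) :
    ∑ u, H u = ∑ u, if u < m.f u then H u + H (m.f u) else 0 := by
  have e : (∑ u, if m.f u < u then H u else 0) = ∑ u, if u < m.f u then H (m.f u) else 0 := by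
    let σ : Equiv.Perm (Fin n) := ⟨m.f, m.f, m.invol, m.invol⟩
    rw [← Equiv.sum_comp σ]
    refine Finset.sum_congr rfl fun u _ => ?_
    have : σ u = m.f u := rfl
    rw [this, m.invol]
  have e2 : (∑ u, if u < m.f u then H u + H (m.f u) else 0)
      = (∑ u, if u < m.f u then H u else 0) + ∑ u, if u < m.f u then H (m.f u) else 0 := by
    rw [← Finset.sum_add_distrib]
    refine Finset.sum_congr rfl fun u _ => ?_
    split_ifs <;> simp
  rw [e2, ← e, ← Finset.sum_add_distrib]
  refine Finset.sum_congr rfl fun u _ => ?_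
  rcases lt_trichotomy u (m.f u) with h | h | h
  · simp [h, h.not_gt]
  · have := h0 u h.symm
    simp [this]
  · simp [h, h.not_gt]

theorem energy {n : ℕ} (m : Matching n) (y : Fin n → ℝ) :
    ∑ u, (y u ^ 2 - avg m y u ^ 2) =
      ∑ u, if u < m.f u then (y u - y (m.f u)) ^ 2 / 2 else 0 := by
  rw [sum_pairs m]
  · refine Finset.sum_congr rfl fun u _ => ?_
    split_ifs with h
    · have h1 : m.f u ≠ u := h.ne'
      have h2 : u ≠ m.f u := h.ne
      simp only [avg, m.invol, h1, h2, if_false]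
      ring
    · rfl
  · intro u hu
    simp [avg, hu]

noncomputable def odd' (a : ℤ) : ℝ := ((a % 2 : ℤ) : ℝ)

theorem odd'_sq_le (a : ℤ) : odd' a ^ 2 ≤ 1 := by
  unfold odd'
  rcases Int.emod_two_eq_zero_or_one a with h | h <;> simp [h]

theorem ediv_up (a : ℤ) : ((Int.ediv (a + 1) 2 : ℤ) : ℝ) = (a : ℝ) / 2 + odd' a / 2 := by
  have : 2 * ((a + 1) / 2) = a + a % 2 := by omega
  have h : (2 : ℝ) * (((a + 1) / 2 : ℤ) : ℝ) = a + ((a % 2 : ℤ) : ℝ) := by exact_mod_cast this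
  change (((a + 1) / 2 : ℤ) : ℝ) = _
  unfold odd'
  linarith

theorem ediv_dn (a : ℤ) : ((Int.ediv a 2 : ℤ) : ℝ) = (a : ℝ) / 2 - odd' a / 2 := by
  have : 2 * (a / 2) = a - a % 2 := by omega
  have h : (2 : ℝ) * ((a / 2 : ℤ) : ℝ) = a - ((a % 2 : ℤ) : ℝ) := by exact_mod_cast this
  change ((a / 2 : ℤ) : ℝ) = _
  unfold odd'
  linarith

noncomputable def sg (b : Bool) : ℝ := if b then 1 else -1

theorem step_err {n : ℕ} (m : Matching n) (φ : Fin n → Fin n → Bool) (x : Fin n → ℤ)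
    (y : Fin n → ℝ) :
    ∑ u, ((step m φ x u : ℝ) - avg m (fun v => (x v : ℝ)) u) * y u =
      ∑ u, if u < m.f u then
        sg (φ u (m.f u)) * (odd' (x u + x (m.f u)) * (y u - y (m.f u)) / 2) else 0 := by
  rw [sum_pairs m]
  · refine Finset.sum_congr rfl fun u _ => ?_
    split_ifs with h
    · have h1 : m.f u ≠ u := h.ne'
      have h2 : u ≠ m.f u := h.ne
      have h3 : ¬ m.f u < u := h.not_gt
      simp only [avg, step, m.invol, h1, h2, h3, h, if_false, if_true]
      rw [add_comm (x (m.f u)) (x u)]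
      cases φ u (m.f u) <;>
        simp only [Bool.false_eq_true, if_false, if_true, ediv_up, sg] <;>
        simp only [ediv_dn] <;> push_cast <;> ring
    · rfl
  · intro u hu
    simp [avg, step, hu]

theorem sum_bool {n : ℕ} (v : Fin n) (h : Bool → ℝ) :
    ∑ b : Fin n → Bool, h (b v) = (Fintype.card (Fin n → Bool) : ℝ) * ((h true + h false) / 2) := by
  let σ : Equiv.Perm (Fin n → Bool) :=
    ⟨fun b w => !(b w), fun b w => !(b w), fun b => by simp, fun b => by simp⟩
  have e : ∑ b : Fin n → Bool, h (b v) = ∑ b : Fin n → Bool, h (!(b v)) :=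
    (Equiv.sum_comp σ (fun b : Fin n → Bool => h (b v))).symm
  have e2 : ∑ b : Fin n → Bool, (h (b v) + h (!(b v))) = ∑ b : Fin n → Bool, (h true + h false) := by
    refine Finset.sum_congr rfl fun b _ => ?_
    cases b v <;> simp [add_comm]
  rw [Finset.sum_add_distrib, ← e, Finset.sum_const, nsmul_eq_mul, Finset.card_univ] at e2
  linarith

theorem step_mgf {n : ℕ} (m : Matching n) (x : Fin n → ℤ) (y : Fin n → ℝ) (l : ℝ) :
    ∑ φ : Fin n → Fin n → Bool,
      Real.exp (l * ∑ u, ((step m φ x u : ℝ) - avg m (fun v => (x v : ℝ)) u) * y u)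
    ≤ (Fintype.card (Fin n → Fin n → Bool) : ℝ) *
      Real.exp (l ^ 2 / 4 * ∑ u, (y u ^ 2 - avg m y u ^ 2)) := by
  rw [energy]
  simp only [step_err, Finset.mul_sum, Real.exp_sum]
  have key := Finset.prod_univ_sum (fun _ : Fin n => (Finset.univ : Finset (Fin n → Bool)))
    (fun (u : Fin n) (b : Fin n → Bool) => Real.exp (l * if u < m.f u then
        sg (b (m.f u)) * (odd' (x u + x (m.f u)) * (y u - y (m.f u)) / 2) else 0))
  rw [Fintype.piFinset_univ] at key
  rw [← key]
  have hc : (Fintype.card (Fin n → Fin n → Bool) : ℝ)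
      = ∏ _u : Fin n, (Fintype.card (Fin n → Bool) : ℝ) := by
    rw [Fintype.card_fun]; simp
  rw [hc, ← Finset.prod_mul_distrib]
  refine Finset.prod_le_prod (fun u _ => Finset.sum_nonneg fun b _ => (Real.exp_pos _).le)
    fun u _ => ?_
  split_ifs with h
  · rw [sum_bool (m.f u) (fun c => Real.exp (l * (sg c * (odd' (x u + x (m.f u)) * (y u - y (m.f u)) / 2))))]
    refine mul_le_mul_of_nonneg_left ?_ (by positivity)
    set c := l * (odd' (x u + x (m.f u)) * (y u - y (m.f u)) / 2) with hcdef
    have h1 : (Real.exp (l * (sg true * (odd' (x u + x (m.f u)) * (y u - y (m.f u)) / 2))) +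
      Real.exp (l * (sg false * (odd' (x u + x (m.f u)) * (y u - y (m.f u)) / 2)))) / 2
        = Real.cosh c := by
      rw [Real.cosh_eq]; simp [sg, hcdef]
    rw [h1]
    refine (Real.cosh_le_exp_half_sq c).trans (Real.exp_le_exp.2 ?_)
    have := odd'_sq_le (x u + x (m.f u))
    have h2 : c ^ 2 / 2 = (l ^ 2 / 4 * ((y u - y (m.f u)) ^ 2 / 2)) * odd' (x u + x (m.f u)) ^ 2 := by
      rw [hcdef]; ring
    rw [h2]
    exact mul_le_of_le_one_right (by positivity) this
  · simp

theorem prod_succ {n : ℕ} (M : ℕ → Matching n) (T : ℕ) :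
    prodMatrix M 1 (T + 1) = prodMatrix M 1 T * (M (T + 1)).matrix := by
  unfold prodMatrix
  have : T + 1 + 1 - 1 = (T + 1 - 1) + 1 := by omega
  rw [this, List.range'_concat]
  simp [add_comm]

theorem loads_congr {n : ℕ} (M : ℕ → Matching n) (Φ Ψ : ℕ → Fin n → Fin n → Bool)
    (x : Fin n → ℤ) (T : ℕ) (h : ∀ s, 1 ≤ s → s ≤ T → Φ s = Ψ s) :
    loads M Φ x T = loads M Ψ x T := by
  unfold loads
  induction T with
  | zero => rfl
  | succ T ih =>
    simp only [loadsFrom]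
    rw [ih (fun s h1 h2 => h s h1 (by omega)), h (T + 1) (by omega) le_rfl]

noncomputable def dev {n : ℕ} (M : ℕ → Matching n) (Φ : ℕ → Fin n → Fin n → Bool)
    (x : Fin n → ℤ) (T : ℕ) (u : Fin n) : ℝ :=
  (loads M Φ x T u : ℝ) - Matrix.vecMul (fun v => (x v : ℝ)) (prodMatrix M 1 T) u

theorem dev_succ {n : ℕ} (M : ℕ → Matching n) (Φ : ℕ → Fin n → Fin n → Bool)
    (x : Fin n → ℤ) (T : ℕ) (y : Fin n → ℝ) :
    ∑ u, dev M Φ x (T + 1) u * y u =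
      (∑ u, ((step (M (T + 1)) (Φ (T + 1)) (loads M Φ x T) u : ℝ)
        - avg (M (T + 1)) (fun v => (loads M Φ x T v : ℝ)) u) * y u)
      + ∑ u, dev M Φ x T u * avg (M (T + 1)) y u := by
  rw [← sum_avg_mul, ← Finset.sum_add_distrib]
  refine Finset.sum_congr rfl fun u _ => ?_
  rw [← add_mul]
  congr 1
  unfold dev
  rw [prod_succ, ← Matrix.vecMul_vecMul, vecMul_matrix]
  have : loads M Φ x (T + 1) = step (M (T + 1)) (Φ (T + 1)) (loads M Φ x T) := by
    simp [loads, loadsFrom]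
  rw [this]
  unfold avg
  split_ifs <;> ring

theorem mgf {n : ℕ} (M : ℕ → Matching n) (x : Fin n → ℤ) (l : ℝ) (T : ℕ) :
    ∀ y : Fin n → ℝ,
    ∑ ω : Fin T → Fin n → Fin n → Bool,
      Real.exp (l * ∑ u, dev M (lift (orientDefault n) ω) x T u * y u)
    ≤ (Fintype.card (Fin T → Fin n → Fin n → Bool) : ℝ) *
      Real.exp (l ^ 2 / 4 * ∑ u, y u ^ 2) := by
  induction T with
  | zero =>
    intro y
    simp only [dev, loads, loadsFrom, prodMatrix]
    simp
    positivity
  | succ T ih =>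
    intro y
    rw [← Equiv.sum_comp (Fin.snocEquiv (fun _ : Fin (T + 1) => Fin n → Fin n → Bool)),
      Fintype.sum_prod_type_right]
    have hl : ∀ (a : Fin n → Fin n → Bool) (ω : Fin T → Fin n → Fin n → Bool),
        (loads M (lift (orientDefault n) ((Fin.snocEquiv (fun _ : Fin (T + 1) => Fin n → Fin n → Bool)) (a, ω))) x T
          = loads M (lift (orientDefault n) ω) x T) ∧
        lift (orientDefault n) ((Fin.snocEquiv (fun _ : Fin (T + 1) => Fin n → Fin n → Bool)) (a, ω)) (T + 1) = a := by
      intro a ω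
      constructor
      · apply loads_congr
        intro s h1 h2
        have h3 : s - 1 < T := by omega
        have h4 : s - 1 < T + 1 := by omega
        simp [lift, h3, h4, Fin.snocEquiv, Fin.snoc]
      · simp [lift, Fin.snocEquiv, Fin.snoc]
    have hterm : ∀ (ω : Fin T → Fin n → Fin n → Bool),
        ∑ a : Fin n → Fin n → Bool, Real.exp (l * ∑ u, dev M (lift (orientDefault n) ((Fin.snocEquiv (fun _ : Fin (T + 1) => Fin n → Fin n → Bool)) (a, ω))) x (T + 1) u * y u)
        ≤ ((Fintype.card (Fin n → Fin n → Bool) : ℝ) *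
      Real.exp (l ^ 2 / 4 * ∑ u, (y u ^ 2 - avg (M (T + 1)) y u ^ 2))) *
        Real.exp (l * ∑ u, dev M (lift (orientDefault n) ω) x T u * avg (M (T + 1)) y u) := by
      intro ω
      refine le_trans (le_of_eq ?_) (mul_le_mul_of_nonneg_right
        (step_mgf (M (T + 1)) (loads M (lift (orientDefault n) ω) x T) y l) (Real.exp_pos _).le)
      rw [Finset.sum_mul]
      refine Finset.sum_congr rfl fun a _ => ?_
      rw [← Real.exp_add, dev_succ, (hl a ω).1, (hl a ω).2, mul_add]
      simp only [dev, (hl a ω).1]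
    refine (Finset.sum_le_sum fun ω _ => hterm ω).trans ?_
    rw [← Finset.mul_sum]
    refine (mul_le_mul_of_nonneg_left (ih (avg (M (T + 1)) y)) (by positivity)).trans (le_of_eq ?_)
    have hc : (Fintype.card (Fin (T + 1) → Fin n → Fin n → Bool) : ℝ)
        = (Fintype.card (Fin n → Fin n → Bool) : ℝ) * (Fintype.card (Fin T → Fin n → Fin n → Bool) : ℝ) := by
      rw [Fintype.card_fun, Fintype.card_fun (α := Fin T)]
      simp only [Fintype.card_fin]
      push_cast
      ring
    rw [hc]
    have he : Real.exp (l ^ 2 / 4 * ∑ u, y u ^ 2) =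
        Real.exp (l ^ 2 / 4 * ∑ u, (y u ^ 2 - avg (M (T + 1)) y u ^ 2)) *
        Real.exp (l ^ 2 / 4 * ∑ u, avg (M (T + 1)) y u ^ 2) := by
      rw [← Real.exp_add, ← mul_add, ← Finset.sum_add_distrib]
      simp
    rw [he]
    ring

theorem disc_le {n : ℕ} (hn : 1 ≤ n) (x : Fin n → ℝ) (c : ℝ) (h : ∀ u v, |x u - x v| ≤ c) :
    disc x ≤ c := by
  haveI : Nonempty (Fin n) := ⟨⟨0, hn⟩⟩
  exact ciSup_le fun u => ciSup_le fun v => h u v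

theorem le_disc {n : ℕ} (x : Fin n → ℝ) (u v : Fin n) : |x u - x v| ≤ disc x := by
  unfold disc
  refine le_trans ?_ (le_ciSup (Set.finite_range _).bddAbove u)
  exact le_ciSup (f := fun v => |x u - x v|) (Set.finite_range _).bddAbove v

/-! Smoothing -/

theorem sum_prod_mulVec {n : ℕ} (L : List (Matching n)) (y : Fin n → ℝ) :
    ∑ u, ((L.map fun m : Matching n => m.matrix).prod.mulVec y) u = ∑ u, y u := by
  induction L with
  | nil => simp
  | cons m L ih =>
    simp only [List.map_cons, List.prod_cons, ← Matrix.mulVec_mulVec]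
    rw [mulVec_matrix, sum_avg, ih]

theorem roundMatrix_eq {n d : ℕ} (Ms : Fin d → Matching n) :
    roundMatrix Ms = ((List.ofFn Ms).map fun m : Matching n => m.matrix).prod := by
  unfold roundMatrix
  rw [List.map_ofFn]
  rfl

theorem prod_circuit {n d : ℕ} (hd : 0 < d) (Ms : Fin d → Matching n) (k : ℕ) :
    prodMatrix (circuit hd Ms) 1 (d * k) = roundMatrix Ms ^ k := by
  induction k with
  | zero => simp [prodMatrix]
  | succ k ih =>
    rw [pow_succ, ← ih]
    unfold prodMatrix roundMatrix
    have h1 : d * (k + 1) + 1 - 1 = (d * k + 1 - 1) + d := by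
      simp [Nat.mul_add]
    rw [h1, ← List.range'_append_1, List.map_append, List.prod_append]
    congr 2
    apply List.ext_getElem
    · simp
    · intro i h2 h3
      have hi : i < d := by simpa using h2
      have hmod : (1 + d * k + i - 1) % d = i := by
        have : 1 + d * k + i - 1 = i + d * k := by omega
        rw [this, Nat.add_mul_mod_self_left, Nat.mod_eq_of_lt hi]
      simp [circuit, hmod]

theorem lam_bdd {n : ℕ} (A : Matrix (Fin n) (Fin n) ℝ) :
    BddAbove (Set.range fun x : {x : Fin n → ℝ // (∑ u, x u) = 0 ∧ (∑ u, (x u) ^ 2) = 1} =>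
      Real.sqrt (∑ u, (A.mulVec x.1 u) ^ 2)) := by
  refine ⟨Real.sqrt (∑ u, ∑ v, A u v ^ 2), ?_⟩
  rintro _ ⟨x, rfl⟩
  refine Real.sqrt_le_sqrt (Finset.sum_le_sum fun u _ => ?_)
  have := Finset.sum_mul_sq_le_sq_mul_sq Finset.univ (fun v => A u v) x.1
  rw [x.2.2, mul_one] at this
  exact this

theorem lam_nonneg {n : ℕ} (A : Matrix (Fin n) (Fin n) ℝ) : 0 ≤ lamMax A :=
  Real.iSup_nonneg fun _ => Real.sqrt_nonneg _

theorem lam_spec {n : ℕ} (A : Matrix (Fin n) (Fin n) ℝ) (y : Fin n → ℝ) (hy : ∑ u, y u = 0) :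
    ∑ u, (A.mulVec y u) ^ 2 ≤ lamMax A ^ 2 * ∑ u, y u ^ 2 := by
  set S := ∑ u, y u ^ 2 with hS
  have hS0 : 0 ≤ S := Finset.sum_nonneg fun u _ => sq_nonneg _
  rcases hS0.eq_or_lt with h | h
  · have : y = 0 := by
      funext u
      have := (Finset.sum_eq_zero_iff_of_nonneg (fun u _ => sq_nonneg (y u))).1 (hS.symm.trans h.symm) u (Finset.mem_univ _)
      simpa using this
    simp [this, ← h]
  · have hs : 0 < Real.sqrt S := Real.sqrt_pos.2 h
    have hss : Real.sqrt S ^ 2 = S := Real.sq_sqrt hS0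
    let z : Fin n → ℝ := (Real.sqrt S)⁻¹ • y
    have hz1 : ∑ u, z u = 0 := by
      simp [z, ← Finset.mul_sum, hy]
    have hz2 : ∑ u, z u ^ 2 = 1 := by
      simp only [z, Pi.smul_apply, smul_eq_mul, mul_pow, ← Finset.mul_sum]
      rw [← hS, inv_pow, hss, inv_mul_cancel₀ h.ne']
    have h1 : Real.sqrt (∑ u, (A.mulVec z u) ^ 2) ≤ lamMax A :=
      le_ciSup (lam_bdd A) ⟨z, hz1, hz2⟩
    have h2 : ∑ u, (A.mulVec z u) ^ 2 ≤ lamMax A ^ 2 := (Real.sqrt_le_left (lam_nonneg A)).1 h1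
    have h3 : ∑ u, (A.mulVec z u) ^ 2 = S⁻¹ * ∑ u, (A.mulVec y u) ^ 2 := by
      simp only [z, Matrix.mulVec_smul, Pi.smul_apply, smul_eq_mul, mul_pow, ← Finset.mul_sum]
      rw [inv_pow, hss]
    rw [h3, inv_mul_le_iff₀ h] at h2
    linarith

theorem pow_spec {n d : ℕ} (Ms : Fin d → Matching n) (k : ℕ) (y : Fin n → ℝ) (hy : ∑ u, y u = 0) :
    ∑ u, ((roundMatrix Ms ^ k).mulVec y u) = 0 ∧
    ∑ u, ((roundMatrix Ms ^ k).mulVec y u) ^ 2 ≤ (lamMax (roundMatrix Ms) ^ 2) ^ k * ∑ u, y u ^ 2 := by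
  induction k with
  | zero => simp [hy]
  | succ k ih =>
    rw [pow_succ' (roundMatrix Ms), ← Matrix.mulVec_mulVec]
    constructor
    · rw [← ih.1]
      nth_rewrite 1 [roundMatrix_eq]
      exact sum_prod_mulVec _ _
    · refine (lam_spec _ _ ih.1).trans ?_
      rw [pow_succ' (lamMax (roundMatrix Ms) ^ 2) k, mul_assoc]
      exact mul_le_mul_of_nonneg_left ih.2 (sq_nonneg _)

theorem exists_smoothing {n d : ℕ} (hn : 1 ≤ n) (hd : 0 < d) (Ms : Fin d → Matching n)
    (hl : lamMax (roundMatrix Ms) < 1) (K : ℝ) :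
    ∃ t, IsSmoothing (circuit hd Ms) 0 t K 1 := by
  have hl2 : lamMax (roundMatrix Ms) ^ 2 < 1 := by
    have := lam_nonneg (roundMatrix Ms); nlinarith
  -- bound: (diff)^2 ≤ n K^2 * lam^(2k) * 4
  have hC : (0:ℝ) < 1 / (n * K ^ 2 * 4 + 1) := by positivity
  obtain ⟨k, hk⟩ := exists_pow_lt_of_lt_one hC hl2
  refine ⟨d * k, fun ξ hξ => disc_le hn _ _ fun u v => ?_⟩
  rw [zero_add, prod_circuit]
  set P := roundMatrix Ms ^ k with hP
  let y : Fin n → ℝ := Pi.single u 1 - Pi.single v 1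
  have hy : ∑ w, y w = 0 := by simp [y]
  have hy2 : ∑ w, y w ^ 2 ≤ 4 := by
    have : ∀ w, y w ^ 2 ≤ 2 * (Pi.single u (1:ℝ) : Fin n → ℝ) w + 2 * (Pi.single v (1:ℝ) : Fin n → ℝ) w := by
      intro w
      simp only [y, Pi.sub_apply, Pi.single_apply]
      split_ifs <;> norm_num
    refine (Finset.sum_le_sum fun w _ => this w).trans (le_of_eq ?_)
    rw [Finset.sum_add_distrib, ← Finset.mul_sum, ← Finset.mul_sum]
    simp; norm_num
  have e : Matrix.vecMul ξ P u - Matrix.vecMul ξ P v = ∑ w, (ξ w - ξ u) * P.mulVec y w := by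
    have h1 : Matrix.vecMul ξ P u - Matrix.vecMul ξ P v = ∑ w, ξ w * P.mulVec y w := by
      have := Matrix.dotProduct_mulVec ξ P y
      change _ = dotProduct ξ (P.mulVec y)
      rw [this]
      simp [y, dotProduct_sub]
    rw [h1]
    simp only [sub_mul, Finset.sum_sub_distrib, ← Finset.mul_sum]
    rw [(pow_spec Ms k y hy).1]
    simp
  have hb : (∑ w, (ξ w - ξ u) * P.mulVec y w) ^ 2 ≤ (n * K ^ 2) * (1 / (n * K ^ 2 * 4 + 1) * 4) := by
    refine (Finset.sum_mul_sq_le_sq_mul_sq _ _ _).trans ?_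
    refine mul_le_mul ?_ ?_ (Finset.sum_nonneg fun _ _ => sq_nonneg _) (by positivity)
    · refine (Finset.sum_le_card_nsmul _ _ (K ^ 2) fun w _ => ?_).trans (le_of_eq (by simp))
      have := (le_disc ξ w u).trans hξ
      rw [← sq_abs]
      exact pow_le_pow_left₀ (abs_nonneg _) this 2
    · exact (pow_spec Ms k y hy).2.trans (mul_le_mul hk.le hy2
        (Finset.sum_nonneg fun _ _ => sq_nonneg _) hC.le)
  rw [e]
  refine abs_le_of_sq_le_sq (hb.trans ?_) zero_le_one
  have hD : (0:ℝ) < n * K ^ 2 * 4 + 1 := by positivity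
  rw [show (n * K ^ 2) * (1 / (n * K ^ 2 * 4 + 1) * 4) = (n * K ^ 2 * 4) / (n * K ^ 2 * 4 + 1) by ring,
    one_pow, div_le_one hD]
  linarith

theorem main_prob {n : ℕ} (hn : 1 ≤ n) (M : ℕ → Matching n) (x : Fin n → ℤ) (T : ℕ) (K : ℝ)
    (hx : discZ x ≤ K) (hT : IsSmoothing M 0 T K 1) :
    1 - 2 / (n : ℝ) ^ 2 ≤
      pr (fun ω : Fin T → Fin n → Fin n → Bool =>
        discZ (loads M (lift (orientDefault n) ω) x T) ≤ 12 * Real.sqrt (Real.log n) + 1) := by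
  classical
  have hn' : (1:ℝ) ≤ n := by exact_mod_cast hn
  have hL : 0 ≤ Real.log n := Real.log_nonneg hn'
  set s := Real.sqrt (Real.log n) with hs
  have hs0 : 0 ≤ s := Real.sqrt_nonneg _
  have hss : s * s = Real.log n := Real.mul_self_sqrt hL
  let D : (Fin T → Fin n → Fin n → Bool) → Fin n → ℝ := fun ω => dev M (lift (orientDefault n) ω) x T
  have hgood : ∀ ω, (∀ w, |D ω w| ≤ 6 * s) →
      discZ (loads M (lift (orientDefault n) ω) x T) ≤ 12 * s + 1 := by
    intro ω h
    refine disc_le hn _ _ fun u v => ?_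
    have h1 := (le_disc _ u v).trans (hT _ hx)
    have hu := h u
    have hv := h v
    simp only [D, dev] at hu hv
    simp only [zero_add] at h1
    rw [abs_le] at *
    constructor <;> linarith [h1.1, h1.2, hu.1, hu.2, hv.1, hv.2]
  have hm : ∀ (w : Fin n) (l : ℝ), ∑ ω, Real.exp (l * D ω w) ≤
      (Fintype.card (Fin T → Fin n → Fin n → Bool) : ℝ) * Real.exp (l ^ 2 / 4) := by
    intro w l
    have := mgf M x l T (Pi.single w 1)
    simpa [Pi.single_apply, D] using this
  set C := (Fintype.card (Fin T → Fin n → Fin n → Bool) : ℝ) with hCdef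
  have hC : 0 < C := by
    rw [hCdef]; exact_mod_cast Fintype.card_pos
  let good : (Fin T → Fin n → Fin n → Bool) → Prop := fun ω =>
        discZ (loads M (lift (orientDefault n) ω) x T) ≤ 12 * s + 1
  have hbad : ∀ ω, ¬ good ω → (n:ℝ) ^ 12 ≤ ∑ w, (Real.exp (2 * s * D ω w) + Real.exp (-(2 * s) * D ω w)) := by
    intro ω h
    have : ∃ w, 6 * s < |D ω w| := by
      by_contra! h'
      exact h (hgood ω h')
    obtain ⟨w, hw⟩ := this
    refine le_trans ?_ (Finset.single_le_sum (f := fun w => Real.exp (2 * s * D ω w) + Real.exp (-(2 * s) * D ω w)) (fun w _ => by positivity) (Finset.mem_univ w))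
    have e : (n:ℝ) ^ 12 = Real.exp (12 * (s * s)) := by
      rw [hss, ← Real.exp_log (show (0:ℝ) < (n:ℝ)^12 by positivity), Real.log_pow]; norm_num
    rw [e]
    rcases lt_abs.1 hw with h1 | h1
    · refine le_trans (Real.exp_le_exp.2 ?_) (le_add_of_nonneg_right (Real.exp_pos _).le)
      nlinarith
    · refine le_trans (Real.exp_le_exp.2 ?_) (le_add_of_nonneg_left (Real.exp_pos _).le)
      nlinarith
  have htot : ∑ ω, ∑ w, (Real.exp (2 * s * D ω w) + Real.exp (-(2 * s) * D ω w)) ≤ n * (C * n + C * n) := by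
    rw [Finset.sum_comm]
    refine (Finset.sum_le_card_nsmul _ _ (C * n + C * n) fun w _ => ?_).trans (le_of_eq (by simp [mul_add]))
    rw [Finset.sum_add_distrib]
    have e1 : Real.exp ((2 * s) ^ 2 / 4) = n := by
      rw [show (2 * s) ^ 2 / 4 = s * s by ring, hss, Real.exp_log (by positivity)]
    have e2 : Real.exp ((-(2 * s)) ^ 2 / 4) = n := by
      rw [show (-(2 * s)) ^ 2 / 4 = s * s by ring, hss, Real.exp_log (by positivity)]
    have a1 := hm w (2 * s)
    have a2 := hm w (-(2 * s))
    rw [e1] at a1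
    rw [e2] at a2
    exact add_le_add a1 a2
  have hcard : ((Finset.univ.filter fun ω => ¬ good ω).card : ℝ) * (n:ℝ) ^ 12 ≤ n * (C * n + C * n) := by
    refine le_trans ?_ htot
    rw [← nsmul_eq_mul]
    refine (Finset.card_nsmul_le_sum _ _ _ fun ω hω => hbad ω (Finset.mem_filter.1 hω).2).trans ?_
    exact Finset.sum_le_sum_of_subset_of_nonneg (Finset.subset_univ _)
      fun _ _ _ => Finset.sum_nonneg fun _ _ => by positivity
  have hsplit : ((Finset.univ.filter good).card : ℝ) + ((Finset.univ.filter fun ω => ¬ good ω).card : ℝ) = C := by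
    rw [hCdef, ← Finset.card_univ]
    exact_mod_cast Finset.card_filter_add_card_filter_not (s := Finset.univ) good
  have hpr : pr good = ((Finset.univ.filter good).card : ℝ) / C := by
    unfold pr
    congr!
  change _ ≤ pr good
  rw [hpr, le_div_iff₀ hC]
  set B := ((Finset.univ.filter fun ω => ¬ good ω).card : ℝ) with hB
  have hB0 : 0 ≤ B := by positivity
  have hBn : B * (n:ℝ) ^ 4 ≤ 2 * C * (n:ℝ) ^ 2 := by
    have : B * (n:ℝ) ^ 4 ≤ B * (n:ℝ) ^ 12 :=
      mul_le_mul_of_nonneg_left (pow_le_pow_right₀ hn' (by norm_num)) hB0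
    nlinarith
  have hBn2 : B ≤ 2 / (n:ℝ) ^ 2 * C := by
    rw [div_mul_eq_mul_div, le_div_iff₀ (by positivity)]
    have h2 : (0:ℝ) < (n:ℝ) ^ 2 := by positivity
    refine le_of_mul_le_mul_right ?_ h2
    calc B * (n:ℝ) ^ 2 * (n:ℝ) ^ 2 = B * (n:ℝ) ^ 4 := by ring
      _ ≤ _ := hBn
  linarith

/-- Balancing circuit model, discrete process with independent
uniformly random orientations: for all sufficiently large `n`, after
`t = τ_cont(K,1)` rounds the discrepancy is at most `12√(log n) + 1` with
probability at least `1 - 2n⁻²`. -/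
theorem stmt10 :
    ∃ N₀ : ℕ, ∀ n : ℕ, N₀ ≤ n →
    ∀ d : ℕ, ∀ hd : 0 < d, ∀ Ms : Fin d → Matching n,
    lamMax (roundMatrix Ms) < 1 →
    ∀ K : ℝ, 1 ≤ K → ∀ x : Fin n → ℤ, discZ x ≤ K →
    1 - 2 / (n : ℝ) ^ 2 ≤
      pr (fun ω : Fin (tauCont (circuit hd Ms) K 1) → Fin n → Fin n → Bool =>
        discZ (loads (circuit hd Ms) (lift (orientDefault n) ω) x
            (tauCont (circuit hd Ms) K 1))
          ≤ 12 * Real.sqrt (Real.log n) + 1) := by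
  refine ⟨1, fun n hn d hd Ms hl K _ x hx => ?_⟩
  exact main_prob hn _ x _ K hx (Nat.sInf_mem (exists_smoothing hn hd Ms hl K))

end LB
end

section
/- Fix a sequence of matchings and a non-negative integer load vector at the end of round t₁, and run the token process. For any token i located at node u = w_i^{(t₁)} at the end of round t₁ and any round t₂ ≥ t₁, P( w_i^{(t₂)} = v ) = M^{[t₁+1,t₂]}_{u,v} for every node v; more generally, for any set D ⊆ V, P( w_i^{(t₂)} ∈ D ) = M^{[t₁+1,t₂]}_{u,D}. -/
namespace LB


/-- One round of the token process.  For each matched pair `{u,v}` (with `u < v`),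
all tokens currently at `u` or `v` are pooled; node `u` receives the `k` tokens of
smallest `π`-rank from the pool, where `k = ⌈pool/2⌉` if the orientation bit
`φ u v` is `true` and `k = ⌊pool/2⌋` otherwise, and `v` receives the rest.
A single uniformly random permutation `π` of all tokens induces an independent,
uniformly random draw (without replacement) inside each pool. -/
def tokenStep {n N : ℕ} (m : Matching n) (φ : Fin n → Fin n → Bool)
    (π : Equiv.Perm (Fin N)) (w : Fin N → Fin n) : Fin N → Fin n := fun i =>
  if m.f (w i) = w i then w i
  else
    let u : Fin n := if w i < m.f (w i) then w i else m.f (w i)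
    let v : Fin n := if w i < m.f (w i) then m.f (w i) else w i
    let P : Finset (Fin N) := Finset.univ.filter fun j => w j = u ∨ w j = v
    let k : ℕ := if φ u v then (P.card + 1) / 2 else P.card / 2
    if (P.filter fun j => π j < π i).card < k then u else v

/-- The token process started at round `t₁` from the placement `w` of the tokens:
`tokensFrom M t₁ R w r i` is the node hosting token `i` after `r` further rounds;
the `(r+1)`-st step uses the matching `M (t₁+r+1)` and the random choices `R (r+1)`
(an orientation bit for every pair together with a random permutation of the tokens). -/
def tokensFrom {n N : ℕ} (M : ℕ → Matching n) (t₁ : ℕ)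
    (R : ℕ → (Fin n → Fin n → Bool) × Equiv.Perm (Fin N)) (w : Fin N → Fin n) :
    ℕ → Fin N → Fin n
  | 0 => w
  | r + 1 => tokenStep (M (t₁ + r + 1)) (R (r + 1)).1 (R (r + 1)).2 (tokensFrom M t₁ R w r)


theorem matrix_mulVec {n : ℕ} (m : Matching n) (g : Fin n → ℝ) (u : Fin n) :
    (m.matrix.mulVec g) u = (g u + g (m.f u)) / 2 := by
  simp only [Matrix.mulVec, dotProduct, Matching.matrix, Matrix.of_apply]
  by_cases h : m.f u = u
  · simp [h]
  · have h1 : ∀ v, (if m.f u = u then (if v = u then (1:ℝ) else 0)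
        else if v = u ∨ v = m.f u then (1 : ℝ) / 2 else 0) * g v
        = (if v = u then g v / 2 else 0) + (if v = m.f u then g v / 2 else 0) := by
      intro v
      by_cases h2 : v = u
      · subst h2
        simp [h, Ne.symm h]; ring
      · by_cases h3 : v = m.f u
        · subst h3; simp [h]; ring
        · simp [h, h2, h3]
    simp only [h1, Finset.sum_add_distrib, Finset.sum_ite_eq', Finset.mem_univ, if_true]
    ring

theorem rank_rev {N : ℕ} (π : Equiv.Perm (Fin N)) (P : Finset (Fin N)) (i : Fin N) (hi : i ∈ P) :
    (P.filter fun j => π j < π i).card +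
      (P.filter fun j => (π.trans Fin.revPerm) j < (π.trans Fin.revPerm) i).card + 1 = P.card := by
  have h1 : (P.filter fun j => (π.trans Fin.revPerm) j < (π.trans Fin.revPerm) i)
      = (P.filter fun j => π i < π j) := by
    apply Finset.filter_congr
    intro j _
    simp [Fin.rev_lt_rev]
  rw [h1]
  have h2 : (P.filter fun j => ¬ π j < π i) = insert i (P.filter fun j => π i < π j) := by
    ext j
    simp only [Finset.mem_filter, Finset.mem_insert, not_lt]
    constructor
    · rintro ⟨hj, hle⟩
      rcases hle.eq_or_lt with h | h
      · left; exact (π.injective h).symm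
      · right; exact ⟨hj, h⟩
    · rintro (h | h)
      · subst h; exact ⟨hi, le_rfl⟩
      · exact ⟨h.1, h.2.le⟩
  have h3 := Finset.card_filter_add_card_filter_not (s := P) (fun j => π j < π i)
  rw [h2, Finset.card_insert_of_notMem (by simp)] at h3
  omega

theorem tokenStep_mem {n N : ℕ} (m : Matching n) (φ : Fin n → Fin n → Bool)
    (π : Equiv.Perm (Fin N)) (w : Fin N → Fin n) (i : Fin N) :
    tokenStep m φ π w i = w i ∨ tokenStep m φ π w i = m.f (w i) := by
  unfold tokenStep
  dsimp only
  split_ifs <;> simp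

theorem tokenStep_rev {n N : ℕ} (m : Matching n) (φ : Fin n → Fin n → Bool)
    (π : Equiv.Perm (Fin N)) (w : Fin N → Fin n) (i : Fin N) :
    tokenStep m (fun a b => !φ a b) (π.trans Fin.revPerm) w i = m.f (tokenStep m φ π w i) := by
  unfold tokenStep
  by_cases h : m.f (w i) = w i
  · simp [h]
  · simp only [h, if_false]
    set u : Fin n := if w i < m.f (w i) then w i else m.f (w i) with hu
    set v : Fin n := if w i < m.f (w i) then m.f (w i) else w i with hv
    have huv : m.f u = v := by
      rw [hu, hv]; split_ifs <;> simp [m.invol]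
    have hvu : m.f v = u := by rw [← huv, m.invol]
    have hi : w i = u ∨ w i = v := by
      rw [hu, hv]; split_ifs <;> simp
    have hr := rank_rev π (Finset.univ.filter fun j => w j = u ∨ w j = v) i (by simpa using hi)
    rcases Bool.eq_false_or_eq_true (φ u v) with hφ | hφ <;>
      simp only [hφ, Bool.not_false, Bool.not_true, if_true, Bool.false_eq_true, if_false] <;>
      split_ifs <;> first | omega | simp [huv, hvu]

/-- The measure-preserving involution. -/
def revChoice (n N : ℕ) : Equiv.Perm ((Fin n → Fin n → Bool) × Equiv.Perm (Fin N)) where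
  toFun a := (fun x y => !a.1 x y, a.2.trans Fin.revPerm)
  invFun a := (fun x y => !a.1 x y, a.2.trans Fin.revPerm)
  left_inv a := by
    ext <;> simp
  right_inv a := by
    ext <;> simp

theorem step_sum {n N : ℕ} (m : Matching n) (w : Fin N → Fin n) (i : Fin N) (g : Fin n → ℝ) :
    ∑ a : (Fin n → Fin n → Bool) × Equiv.Perm (Fin N), g (tokenStep m a.1 a.2 w i)
      = (Fintype.card ((Fin n → Fin n → Bool) × Equiv.Perm (Fin N)) : ℝ)
        * (m.matrix.mulVec g) (w i) := by
  rw [matrix_mulVec]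
  have h1 := Equiv.sum_comp (revChoice n N) (fun a => g (tokenStep m a.1 a.2 w i))
  have h2 : ∀ a, g (tokenStep m (revChoice n N a).1 (revChoice n N a).2 w i)
      = g (w i) + g (m.f (w i)) - g (tokenStep m a.1 a.2 w i) := by
    intro a
    have : tokenStep m (revChoice n N a).1 (revChoice n N a).2 w i
      = m.f (tokenStep m a.1 a.2 w i) := tokenStep_rev m a.1 a.2 w i
    rw [this]
    rcases tokenStep_mem m a.1 a.2 w i with h | h <;> rw [h]
    · ring
    · rw [m.invol]; ring
  simp only [h2, Finset.sum_sub_distrib, Finset.sum_const, Finset.card_univ, nsmul_eq_mul] at h1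
  linarith

theorem tokensFrom_congr {n N : ℕ} (M : ℕ → Matching n) (t₁ : ℕ)
    (R R' : ℕ → (Fin n → Fin n → Bool) × Equiv.Perm (Fin N)) (w : Fin N → Fin n) (r : ℕ)
    (h : ∀ s, 1 ≤ s → s ≤ r → R s = R' s) : tokensFrom M t₁ R w r = tokensFrom M t₁ R' w r := by
  induction r with
  | zero => rfl
  | succ r ih =>
    simp only [tokensFrom]
    rw [ih (fun s h1 h2 => h s h1 (by omega)), h (r+1) (by omega) le_rfl]

theorem prodMatrix_succ {n : ℕ} (M : ℕ → Matching n) (t r : ℕ) :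
    prodMatrix M (t+1) (t+(r+1)) = prodMatrix M (t+1) (t+r) * (M (t+r+1)).matrix := by
  unfold prodMatrix
  have h1 : t + (r+1) + 1 - (t+1) = r + 1 := by omega
  have h2 : t + r + 1 - (t+1) = r := by omega
  rw [h1, h2, List.range'_concat]
  simp [show t + 1 + r = t + r + 1 by omega]

theorem main_sum {n N : ℕ} (M : ℕ → Matching n) (t : ℕ) (w0 : Fin N → Fin n) (i : Fin N)
    (a₀ : (Fin n → Fin n → Bool) × Equiv.Perm (Fin N)) (r : ℕ) : ∀ g : Fin n → ℝ,
    ∑ ω : Fin r → (Fin n → Fin n → Bool) × Equiv.Perm (Fin N),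
        g (tokensFrom M t (lift a₀ ω) w0 r i)
      = (Fintype.card (Fin r → (Fin n → Fin n → Bool) × Equiv.Perm (Fin N)) : ℝ)
        * ((prodMatrix M (t+1) (t+r)).mulVec g) (w0 i) := by
  induction r with
  | zero =>
    intro g
    simp [prodMatrix, tokensFrom]
  | succ r ih =>
    intro g
    rw [prodMatrix_succ, ← Matrix.mulVec_mulVec]
    have e := Equiv.sum_comp
      (Fin.snocEquiv (fun _ : Fin (r+1) => (Fin n → Fin n → Bool) × Equiv.Perm (Fin N)))
      (fun ω => g (tokensFrom M t (lift a₀ ω) w0 (r+1) i))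
    rw [← e, Fintype.sum_prod_type_right]
    have key : ∀ (ω : Fin r → (Fin n → Fin n → Bool) × Equiv.Perm (Fin N)) a,
        tokensFrom M t (lift a₀ (Fin.snocEquiv
          (fun _ : Fin (r+1) => (Fin n → Fin n → Bool) × Equiv.Perm (Fin N)) (a, ω))) w0 (r+1) i
        = tokenStep (M (t+r+1)) a.1 a.2 (tokensFrom M t (lift a₀ ω) w0 r) i := by
      intro ω a
      simp only [tokensFrom]
      rw [tokensFrom_congr M t _ (lift a₀ ω) w0 r]
      · have : lift a₀ (Fin.snocEquiv
          (fun _ : Fin (r+1) => (Fin n → Fin n → Bool) × Equiv.Perm (Fin N)) (a, ω)) (r+1) = a := by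
          simp [lift, Fin.snocEquiv, Fin.snoc]
        rw [this]
      · intro s h1 h2
        have h3 : s - 1 < r := by omega
        have h4 : s - 1 < r + 1 := by omega
        simp [lift, Fin.snocEquiv, Fin.snoc, h3, h4]
    simp only [key, step_sum]
    rw [← Finset.mul_sum, ih]
    simp only [Fintype.card_fun, Fintype.card_fin, pow_succ, Nat.cast_mul]
    ring

theorem main_pr {n N : ℕ} (M : ℕ → Matching n) (t₁ t₂ : ℕ)
    (h : t₁ ≤ t₂) (w0 : Fin N → Fin n) (i : Fin N) (D : Finset (Fin n)) :
      pr (fun ω : Fin (t₂ - t₁) → (Fin n → Fin n → Bool) × Equiv.Perm (Fin N) =>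
          tokensFrom M t₁ (lift (orientDefault n, Equiv.refl (Fin N)) ω) w0
            (t₂ - t₁) i ∈ D)
        = ∑ v ∈ D, prodMatrix M (t₁ + 1) t₂ (w0 i) v := by
  classical
  have hm := main_sum M t₁ w0 i (orientDefault n, Equiv.refl (Fin N)) (t₂ - t₁)
    (fun v => if v ∈ D then 1 else 0)
  rw [Nat.add_sub_cancel' h] at hm
  have hc : (Fintype.card (Fin (t₂ - t₁) → (Fin n → Fin n → Bool) × Equiv.Perm (Fin N)) : ℝ) ≠ 0 :=
    Nat.cast_ne_zero.mpr (@Fintype.card_ne_zero _ _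
      ⟨fun _ => (orientDefault n, Equiv.refl (Fin N))⟩)
  unfold pr
  rw [div_eq_iff hc, mul_comm]
  simp only [Matrix.mulVec, dotProduct, mul_ite, mul_one, mul_zero, Finset.sum_ite_mem,
    Finset.univ_inter, Finset.sum_boole] at hm
  rw [← hm]
  congr!

/-- In the token process (run from round `t₁` with independent
uniformly random orientations and draws), each token performs a random walk w.r.t.
the matching matrices:  `P(w_i^{(t₂)} = v) = M^{[t₁+1,t₂]}_{w_i^{(t₁)},v}` and
`P(w_i^{(t₂)} ∈ D) = M^{[t₁+1,t₂]}_{w_i^{(t₁)},D}`. -/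
theorem stmt11 {n N : ℕ} (hn : 0 < n) (M : ℕ → Matching n) (t₁ t₂ : ℕ)
    (h : t₁ ≤ t₂) (w0 : Fin N → Fin n) (i : Fin N) :
    (∀ v : Fin n,
      pr (fun ω : Fin (t₂ - t₁) → (Fin n → Fin n → Bool) × Equiv.Perm (Fin N) =>
          tokensFrom M t₁ (lift (orientDefault n, Equiv.refl (Fin N)) ω) w0
            (t₂ - t₁) i = v)
        = prodMatrix M (t₁ + 1) t₂ (w0 i) v) ∧
    (∀ D : Finset (Fin n),
      pr (fun ω : Fin (t₂ - t₁) → (Fin n → Fin n → Bool) × Equiv.Perm (Fin N) =>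
          tokensFrom M t₁ (lift (orientDefault n, Equiv.refl (Fin N)) ω) w0
            (t₂ - t₁) i ∈ D)
        = ∑ v ∈ D, prodMatrix M (t₁ + 1) t₂ (w0 i) v) := by
  refine ⟨fun v => ?_, fun D => main_pr M t₁ t₂ h w0 i D⟩
  have := main_pr M t₁ t₂ h w0 i {v}
  simpa only [Finset.mem_singleton, Finset.sum_singleton] using this

end LB
end
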